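/- Let s, m, c be positive integers with m + c ≤ s, and let q be a prime power. Let A and B be independent random matrices, each distributed uniformly over the s×s matrices with entries in F_q. Let X and Y be fixed m×s matrices over F_q and Λ and Θ be fixed c×s matrices over F_q such that the (c+m)×s matrix obtained by vertically stacking Λ on top of Y has rank c+m, and the (c+m)×s matrix obtained by vertically stacking Θ on top of X has rank c+m. Then the conditional Shannon entropy in base q satisfies H_q(A | (A+B)Xᵀ, Y·B, Λ·(A+B), B·Θᵀ) ≥ s² − (m+c)². -/

import Mathlib

open Finset Matrix

/-- `pr p X x` is the probability that the random variable `X` (on a finite sample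
space with probability mass function `p`) takes the value `x`. -/
noncomputable def pr {Ω α : Type*} [Fintype Ω] [DecidableEq α]
    (p : Ω → ℝ) (X : Ω → α) (x : α) : ℝ :=
  ∑ ω, if X ω = x then p ω else 0

/-- Shannon entropy in base `q` of the random variable `X`. -/
noncomputable def Hq {Ω α : Type*} [Fintype Ω] [Fintype α] [DecidableEq α]
    (q : ℕ) (p : Ω → ℝ) (X : Ω → α) : ℝ :=
  -∑ x : α, pr p X x * Real.logb q (pr p X x)

/-- Conditional Shannon entropy in base `q`: `H_q(X | Y) = H_q(X, Y) - H_q(Y)`. -/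
noncomputable def condHq {Ω α β : Type*} [Fintype Ω] [Fintype α] [Fintype β]
    [DecidableEq α] [DecidableEq β]
    (q : ℕ) (p : Ω → ℝ) (X : Ω → α) (Y : Ω → β) : ℝ :=
  Hq q p (fun ω => (X ω, Y ω)) - Hq q p Y

/-!
For linear maps `f` and `g` on a finite space, conditioning a uniform input on a value of `g` makes
`f` uniform on a translate of `f (ker g)`, so the entropy of `f` given `g` is the dimension of
`f (ker g)`. Here `f` is the projection to `A` and `g` the observed tuple. Write `S(M, N)` for the
space of matrices killed by `M` on the left and by `Nᵀ` on the right. A pair lies in `ker g` exactly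
when `A + B ∈ S(Λ, X)` and `B ∈ S(Y, Θ)`, hence `f (ker g) = S(Λ, X) + S(Y, Θ)`, while the
intersection of the two summands is again of this form, for the stacked matrices. Counting
dimensions gives the exact entropy `s² - m² - c²`: only `Y A Xᵀ` and `Λ A Θᵀ` are revealed about
`A`.
-/

section Entropy

variable {Ω α : Type*} [Fintype Ω] [Fintype α] [DecidableEq α]

theorem sum_pr (p : Ω → ℝ) (X : Ω → α) : ∑ x, pr p X x = ∑ ω, p ω := by
  simp only [pr]
  rw [Finset.sum_comm]
  simp only [Finset.sum_ite_eq, Finset.mem_univ, if_true]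

theorem Hq_eq_logb_of_pr_eq_zero_or_inv {q : ℕ} {p : Ω → ℝ} {X : Ω → α} {N : ℝ}
    (hp : ∑ ω, p ω = 1) (h : ∀ x, pr p X x = 0 ∨ pr p X x = N⁻¹) :
    Hq q p X = Real.logb q N := by
  have hterm (x : α) : pr p X x * Real.logb q (pr p X x) = pr p X x * -Real.logb q N := by
    rcases h x with h | h
    · simp only [h, zero_mul]
    · rw [h, Real.logb_inv]
  rw [Hq, Finset.sum_congr rfl fun x _ => hterm x, ← Finset.sum_mul, sum_pr, hp, one_mul, neg_neg]

end Entropy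

theorem card_range_addMonoidHom_prod {G H H' : Type*} [AddGroup G] [AddGroup H]
    [AddGroup H'] (f : G →+ H) (g : G →+ H') :
    Nat.card (f.prod g).range = Nat.card (g.ker.map f) * Nat.card g.range := by
  rw [← AddSubgroup.index_ker, AddMonoidHom.ker_prod, ← AddSubgroup.relIndex_ker,
    ← AddSubgroup.index_ker, ← AddSubgroup.inf_relIndex_right]
  exact (AddSubgroup.relIndex_mul_index inf_le_right).symm

section UniformHom

variable {G H H' : Type*} [AddGroup G] [Fintype G] [AddGroup H] [DecidableEq H]
  [AddGroup H'] [DecidableEq H']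

theorem pr_uniform_addMonoidHom_apply (f : G →+ H) (g : G) :
    pr (fun _ : G => (1 : ℝ) / Fintype.card G) f (f g) = (Nat.card f.range : ℝ)⁻¹ := by
  have hfiber : #{x | f x = f g} = Nat.card f.ker := by
    rw [AddMonoidHom.card_fiber_eq_of_mem_range f ⟨g, rfl⟩ ⟨0, map_zero f⟩,
      ← Fintype.card_subtype, ← Nat.card_eq_fintype_card]
    rfl
  have hcard : (Nat.card f.ker : ℝ) * Nat.card f.range = Fintype.card G := by
    rw [← AddSubgroup.index_ker, ← Nat.card_eq_fintype_card]
    exact_mod_cast f.ker.card_mul_index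
  have hker : (Nat.card f.ker : ℝ) ≠ 0 := Nat.cast_ne_zero.mpr Nat.card_pos.ne'
  rw [pr, ← Finset.sum_filter, Finset.sum_const, hfiber, nsmul_eq_mul, ← hcard, mul_one_div,
    div_mul_cancel_left₀ hker]

theorem Hq_uniform_addMonoidHom [Fintype H] (q : ℕ) (f : G →+ H) :
    Hq q (fun _ : G => (1 : ℝ) / Fintype.card G) f = Real.logb q (Nat.card f.range) := by
  refine Hq_eq_logb_of_pr_eq_zero_or_inv (by simp) fun x => ?_
  by_cases hx : x ∈ f.range
  · obtain ⟨g, rfl⟩ := hx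
    exact .inr (pr_uniform_addMonoidHom_apply f g)
  · exact .inl (Finset.sum_eq_zero fun g _ => if_neg fun hg => hx ⟨g, hg⟩)

theorem condHq_uniform_addMonoidHom [Fintype H] [Fintype H'] (q : ℕ) (f : G →+ H) (g : G →+ H') :
    condHq q (fun _ : G => (1 : ℝ) / Fintype.card G) f g =
      Real.logb q (Nat.card (g.ker.map f)) := by
  have hmap : (Nat.card (g.ker.map f) : ℝ) ≠ 0 := Nat.cast_ne_zero.mpr Nat.card_pos.ne'
  have hrange : (Nat.card g.range : ℝ) ≠ 0 := Nat.cast_ne_zero.mpr Nat.card_pos.ne'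
  change Hq q _ (f.prod g) - Hq q _ g = _
  rw [Hq_uniform_addMonoidHom, Hq_uniform_addMonoidHom, card_range_addMonoidHom_prod, Nat.cast_mul,
    Real.logb_mul hmap hrange, add_sub_cancel_right]

end UniformHom

section LinearMaps

variable {K V V₁ V₂ V₃ : Type*} [Field K] [AddCommGroup V] [Module K V]
  [AddCommGroup V₁] [Module K V₁] [AddCommGroup V₂] [Module K V₂] [AddCommGroup V₃] [Module K V₃]

theorem condHq_uniform_linearMap [Fintype K] [Fintype V] [Fintype V₁] [Fintype V₂] [DecidableEq V₁]
    [DecidableEq V₂] (f : V →ₗ[K] V₁) (g : V →ₗ[K] V₂) :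
    condHq (Fintype.card K) (fun _ : V => (1 : ℝ) / Fintype.card V) f g =
      Module.finrank K ((LinearMap.ker g).map f) := by
  have hK : (1 : ℝ) < Fintype.card K := by exact_mod_cast Fintype.one_lt_card
  have hcard : Nat.card ((LinearMap.ker g).map f) =
      Fintype.card K ^ Module.finrank K ((LinearMap.ker g).map f) := by
    rw [Module.natCard_eq_pow_finrank (K := K), Nat.card_eq_fintype_card]
  refine (condHq_uniform_addMonoidHom _ f.toAddMonoidHom g.toAddMonoidHom).trans ?_
  change Real.logb _ (Nat.card ((LinearMap.ker g).map f)) = _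
  rw [hcard, Nat.cast_pow, Real.logb_pow, Real.logb_self_eq_one hK, mul_one]

theorem finrank_ker_compRight_inf_ker_lcomp
    [FiniteDimensional K V₁] [FiniteDimensional K V₂] (a : V₂ →ₗ[K] V₃) (b : V →ₗ[K] V₁) :
    Module.finrank K ↥(LinearMap.ker (a.compRight K (M := V₁)) ⊓ LinearMap.ker (b.lcomp K V₂)) =
      Module.finrank K (LinearMap.ker a) *
        (Module.finrank K V₁ - Module.finrank K (LinearMap.range b)) := by
  let Φ : (V₁ ⧸ LinearMap.range b →ₗ[K] LinearMap.ker a) →ₗ[K] V₁ →ₗ[K] V₂ :=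
    (LinearMap.range b).mkQ.lcomp K V₂ ∘ₗ (LinearMap.ker a).subtype.compRight K
  have hΦ : Function.Injective Φ := fun f g hfg =>
    Submodule.linearMap_qext _ (LinearMap.ext fun v => Subtype.ext (LinearMap.congr_fun hfg v))
  have hrange : LinearMap.range Φ =
      LinearMap.ker (a.compRight K (M := V₁)) ⊓ LinearMap.ker (b.lcomp K V₂) := by
    ext f
    constructor
    · rintro ⟨g, rfl⟩
      refine ⟨LinearMap.ext fun v => (g _).2, LinearMap.ext fun v => ?_⟩
      have hv : (LinearMap.range b).mkQ (b v) = 0 :=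
        (Submodule.Quotient.mk_eq_zero _).mpr ⟨v, rfl⟩
      change (g ((LinearMap.range b).mkQ (b v)) : V₂) = 0
      rw [hv, map_zero, ZeroMemClass.coe_zero]
    · rintro ⟨ha, hb⟩
      refine ⟨(LinearMap.range b).liftQ (f.codRestrict _ (LinearMap.congr_fun ha)) ?_, rfl⟩
      rintro _ ⟨v, rfl⟩
      exact Subtype.ext (LinearMap.congr_fun hb v)
  rw [← hrange, LinearMap.finrank_range_of_inj hΦ, Module.finrank_linearMap,
    Submodule.finrank_quotient, mul_comm]

end LinearMaps

section Matrices

variable {K : Type*} [Field K] {n p m m' c c' : Type*} [Fintype n] [Fintype p]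

/-- The space of matrices annihilated by `M` on the left and by `Nᵀ` on the right, used to describe
the kernel of `observation`. Like the matrices in the theorem, `N` is given untransposed. -/
def twoSidedAnnihilator (M : Matrix m n K) (N : Matrix c p K) : Submodule K (Matrix n p K) :=
  LinearMap.ker (mulLeftLinearMap p K M) ⊓ LinearMap.ker (mulRightLinearMap n K Nᵀ)

theorem mem_twoSidedAnnihilator {M : Matrix m n K} {N : Matrix c p K} {B : Matrix n p K} :
    B ∈ twoSidedAnnihilator M N ↔ M * B = 0 ∧ B * Nᵀ = 0 :=
  Iff.rfl

theorem twoSidedAnnihilator_fromRows (M : Matrix m n K) (M' : Matrix m' n K) (N : Matrix c p K)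
    (N' : Matrix c' p K) :
    twoSidedAnnihilator (fromRows M M') (fromRows N N') =
      twoSidedAnnihilator M N' ⊓ twoSidedAnnihilator M' N := by
  ext B
  simp only [Submodule.mem_inf, mem_twoSidedAnnihilator, fromRows_mul, transpose_fromRows,
    mul_fromCols, ← fromRows_zero, ← fromCols_zero, fromRows_ext_iff, fromCols_ext_iff]
  tauto

theorem finrank_ker_mulVecLin (M : Matrix m n K) :
    Module.finrank K (LinearMap.ker M.mulVecLin) = Fintype.card n - M.rank := by
  have := M.mulVecLin.finrank_range_add_finrank_ker
  rw [Module.finrank_fintype_fun_eq_card] at this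
  exact Nat.eq_sub_of_add_eq' this

theorem finrank_twoSidedAnnihilator [Finite c] (M : Matrix m n K) (N : Matrix c p K) :
    Module.finrank K (twoSidedAnnihilator M N) =
      (Fintype.card n - M.rank) * (Fintype.card p - N.rank) := by
  classical
  have := Fintype.ofFinite c
  let S := LinearMap.ker ((toLin' M).compRight K (M := p → K)) ⊓
    LinearMap.ker ((toLin' Nᵀ).lcomp K (n → K))
  have hcomap : twoSidedAnnihilator M N = S.comap (toLin' : Matrix n p K ≃ₗ[K] _).toLinearMap := by
    ext B
    change M * B = 0 ∧ B * Nᵀ = 0 ↔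
      toLin' M ∘ₗ toLin' B = 0 ∧ toLin' B ∘ₗ toLin' Nᵀ = 0
    rw [← toLin'_mul, ← toLin'_mul, LinearEquiv.map_eq_zero_iff, LinearEquiv.map_eq_zero_iff]
  rw [hcomap, (toLin'.ofSubmodule' S).finrank_eq, finrank_ker_compRight_inf_ker_lcomp,
    toLin'_apply', toLin'_apply', finrank_ker_mulVecLin, Module.finrank_fintype_fun_eq_card,
    ← rank, rank_transpose]

theorem rank_eq_card_of_rank_fromRows_eq [Fintype m] [Fintype c] {M : Matrix m n K}
    {N : Matrix c n K} (h : (fromRows M N).rank = Fintype.card m + Fintype.card c) :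
    M.rank = Fintype.card m ∧ N.rank = Fintype.card c := by
  have hrow : LinearIndependent K (fromRows M N).row := by
    rw [linearIndependent_iff_card_eq_finrank_span, Set.finrank, ← rank_eq_finrank_span_row, h,
      Fintype.card_sum]
  exact ⟨(hrow.comp _ Sum.inl_injective).rank_matrix, (hrow.comp _ Sum.inr_injective).rank_matrix⟩

theorem finrank_twoSidedAnnihilator_sup [Fintype m] [Fintype m'] [Fintype c] [Fintype c']
    {X : Matrix m' p K} {Y : Matrix m n K} {Λ : Matrix c n K} {Θ : Matrix c' p K}
    (hΛY : (fromRows Λ Y).rank = Fintype.card c + Fintype.card m)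
    (hΘX : (fromRows Θ X).rank = Fintype.card c' + Fintype.card m') :
    Module.finrank K ↥(twoSidedAnnihilator Λ X ⊔ twoSidedAnnihilator Y Θ) +
        Fintype.card m * Fintype.card m' + Fintype.card c * Fintype.card c' =
      Fintype.card n * Fintype.card p := by
  obtain ⟨d, hd⟩ := Nat.exists_eq_add_of_le (hΛY ▸ rank_le_card_width (fromRows Λ Y))
  obtain ⟨e, he⟩ := Nat.exists_eq_add_of_le (hΘX ▸ rank_le_card_width (fromRows Θ X))
  obtain ⟨hΛ, hY⟩ := rank_eq_card_of_rank_fromRows_eq hΛY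
  obtain ⟨hΘ, hX⟩ := rank_eq_card_of_rank_fromRows_eq hΘX
  have hinf : Module.finrank K ↥(twoSidedAnnihilator Λ X ⊓ twoSidedAnnihilator Y Θ) = d * e := by
    rw [← twoSidedAnnihilator_fromRows, finrank_twoSidedAnnihilator, hΛY, hΘX, hd, he,
      Nat.add_sub_cancel_left, Nat.add_sub_cancel_left]
  have hΛX : Module.finrank K (twoSidedAnnihilator Λ X) =
      (Fintype.card m + d) * (Fintype.card c' + e) := by
    rw [finrank_twoSidedAnnihilator, hΛ, hX]
    congr 1 <;> omega
  have hYΘ : Module.finrank K (twoSidedAnnihilator Y Θ) =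
      (Fintype.card c + d) * (Fintype.card m' + e) := by
    rw [finrank_twoSidedAnnihilator, hY, hΘ]
    congr 1 <;> omega
  have hdim := Submodule.finrank_sup_add_finrank_inf_eq
    (twoSidedAnnihilator Λ X) (twoSidedAnnihilator Y Θ)
  rw [hinf, hΛX, hYΘ] at hdim
  rw [hd, he]
  linarith

/-- The map sending a pair `(A, B)` to the tuple `((A + B)Xᵀ, YB, Λ(A + B), BΘᵀ)` on which the
entropy of `A` is conditioned. -/
def observation (X : Matrix m' p K) (Y : Matrix m n K) (Λ : Matrix c n K) (Θ : Matrix c' p K) :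
    Matrix n p K × Matrix n p K →ₗ[K]
      Matrix n m' K × Matrix m p K × Matrix c p K × Matrix n c' K :=
  let A := LinearMap.fst K (Matrix n p K) (Matrix n p K)
  let B := LinearMap.snd K (Matrix n p K) (Matrix n p K)
  (mulRightLinearMap n K Xᵀ ∘ₗ (A + B)).prod <| (mulLeftLinearMap p K Y ∘ₗ B).prod <|
    (mulLeftLinearMap p K Λ ∘ₗ (A + B)).prod (mulRightLinearMap n K Θᵀ ∘ₗ B)

theorem mem_ker_observation {X : Matrix m' p K} {Y : Matrix m n K} {Λ : Matrix c n K}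
    {Θ : Matrix c' p K} {A B : Matrix n p K} :
    (A, B) ∈ LinearMap.ker (observation X Y Λ Θ) ↔
      A + B ∈ twoSidedAnnihilator Λ X ∧ B ∈ twoSidedAnnihilator Y Θ := by
  change ((A + B) * Xᵀ, Y * B, Λ * (A + B), B * Θᵀ) = 0 ↔ _
  simp only [Prod.mk_eq_zero, mem_twoSidedAnnihilator]
  tauto

theorem map_fst_ker_observation (X : Matrix m' p K) (Y : Matrix m n K) (Λ : Matrix c n K)
    (Θ : Matrix c' p K) :
    (LinearMap.ker (observation X Y Λ Θ)).map (LinearMap.fst K _ _) =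
      twoSidedAnnihilator Λ X ⊔ twoSidedAnnihilator Y Θ := by
  ext A
  rw [Submodule.mem_sup]
  constructor
  · rintro ⟨⟨A, B⟩, hAB, rfl⟩
    obtain ⟨hsum, hB⟩ := mem_ker_observation.mp hAB
    exact ⟨A + B, hsum, -B, neg_mem hB, add_neg_cancel_right A B⟩
  · rintro ⟨C, hC, B, hB, rfl⟩
    refine ⟨(C + B, -B), mem_ker_observation.mpr ⟨?_, neg_mem hB⟩, rfl⟩
    rwa [add_neg_cancel_right]

theorem stmt3_general [Fintype m] [Fintype m'] [Fintype c] [Fintype c'] [DecidableEq n]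
    [DecidableEq p] [DecidableEq m] [DecidableEq m'] [DecidableEq c] [DecidableEq c'] [Fintype K]
    [DecidableEq K] (X : Matrix m' p K) (Y : Matrix m n K) (Λ : Matrix c n K) (Θ : Matrix c' p K)
    (hΛY : (fromRows Λ Y).rank = Fintype.card c + Fintype.card m)
    (hΘX : (fromRows Θ X).rank = Fintype.card c' + Fintype.card m') :
    condHq (Fintype.card K)
        (fun _ : Matrix n p K × Matrix n p K =>
          (1 : ℝ) / Fintype.card (Matrix n p K × Matrix n p K))
        (fun ω => ω.1)
        (fun ω => ((ω.1 + ω.2) * Xᵀ, Y * ω.2, Λ * (ω.1 + ω.2), ω.2 * Θᵀ)) =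
      (Fintype.card n : ℝ) * Fintype.card p - Fintype.card m * Fintype.card m' -
        Fintype.card c * Fintype.card c' := by
  have hentropy := condHq_uniform_linearMap
    (LinearMap.fst K (Matrix n p K) (Matrix n p K)) (observation X Y Λ Θ)
  rw [map_fst_ker_observation] at hentropy
  refine hentropy.trans (eq_sub_of_add_eq (eq_sub_of_add_eq ?_))
  rw [add_right_comm]
  exact_mod_cast finrank_twoSidedAnnihilator_sup hΛY hΘX

end Matrices

/-- Let `A, B` be independent uniformly random `s × s` matrices over the finite
field with `q` elements (modelled by the uniform distribution on pairs).  Let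
`X, Y` be fixed `m × s` matrices and `Λ, Θ` fixed `c × s` matrices such that the
stackings `Λ ‖ Y` and `Θ ‖ X` both have rank `c + m`.  Then
`H_q(A | (A+B)Xᵀ, Y·B, Λ·(A+B), B·Θᵀ) ≥ s² − (m+c)²`. -/
theorem stmt3 (s m c q : ℕ) (hs : 0 < s) (hm : 0 < m) (hc : 0 < c)
    (hmc : m + c ≤ s)
    (K : Type) [Field K] [Fintype K] [DecidableEq K] (hq : Fintype.card K = q)
    (X Y : Matrix (Fin m) (Fin s) K) (Λ Θ : Matrix (Fin c) (Fin s) K)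
    (hΛY : (Matrix.fromRows Λ Y).rank = c + m)
    (hΘX : (Matrix.fromRows Θ X).rank = c + m) :
    (s : ℝ) ^ 2 - ((m : ℝ) + c) ^ 2 ≤
      condHq q
        (fun _ : Matrix (Fin s) (Fin s) K × Matrix (Fin s) (Fin s) K =>
          (1 : ℝ) / Fintype.card (Matrix (Fin s) (Fin s) K × Matrix (Fin s) (Fin s) K))
        (fun ω => ω.1)
        (fun ω => ((ω.1 + ω.2) * Xᵀ, Y * ω.2, Λ * (ω.1 + ω.2), ω.2 * Θᵀ)) := by
  subst hq
  rw [stmt3_general X Y Λ Θ (by simpa using hΛY) (by simpa using hΘX)]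
  simp only [Fintype.card_fin]
  nlinarith [mul_nonneg (Nat.cast_nonneg (α := ℝ) m) (Nat.cast_nonneg (α := ℝ) c)]
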